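/- Let α, β, γ ∈ ℂ with α+β ∉ ℤ and γ ∉ ℤ, and let X, Y, Z be nonnegative integers. Then ∑ (−1)^{i+j+k+l+m} · ((β)_n (γ)_n / (n! (α+β)_n)) · C(−γ−n, i) · C(−β−n, j) · C(α+β+n−1, k) · C(γ−α, l) · C(n, m) = (α)_X (β)_Y (1−γ)_Z (γ)_{X+Y−Z} / (X! · Y! · Z! · (α+β)_{X+Y−Z}), where the (finite) sum ranges over all nonnegative integers i, j, k, l, m, n satisfying i+l+m = X, j+n−m = Y and j+k+l = Z. -/

import Mathlib

open Finset

/-- Pochhammer symbol `(a)_k` for complex `a` and integer `k`. -/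
noncomputable def cpoch (a : ℂ) (k : ℤ) : ℂ :=
  if 0 ≤ k then ∏ i ∈ Finset.range k.toNat, (a + (i : ℂ))
  else (∏ i ∈ Finset.range (-k).toNat, (a + (k : ℂ) + (i : ℂ)))⁻¹

/-- Generalized binomial coefficient `C(a, r) = a(a-1)⋯(a-r+1)/r!`. -/
noncomputable def genBinom (a : ℂ) (r : ℕ) : ℂ :=
  (∏ i ∈ Finset.range r, (a - (i : ℂ))) / (r.factorial : ℂ)

/-!
Writing `n = m + y` with `y = Y - j`, each summand separates: for fixed `l` it is a constant times a
product of a function of `m` and a function of `j`, so the sums over `m` and over `j` are two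
independent Chu–Vandermonde sums. The remaining sum over `l` is balanced and is evaluated by the
Pfaff–Saalschütz theorem. Since `Ring.choose` makes sense in any binomial ring, the Vandermonde and
Saalschütz steps are free of denominators; only the separation of the summand divides by Pochhammer
symbols.
-/

section BinomialRing

open Ring

variable {R : Type*} [CommRing R] [BinomialRing R]

lemma choose_mul_choose_natCast (r : R) {n k : ℕ} (h : k ≤ n) :
    choose r n * choose (n : R) k = choose r (n - k) * choose (r - ((n - k : ℕ) : R)) k := by
  have key := choose_smul_choose r (Nat.sub_le n k)
  rwa [Nat.choose_symm h, Nat.sub_sub_self h, nsmul_eq_mul, ← choose_natCast, mul_comm] at key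

lemma choose_add_eq_sum_range (a b : R) (n : ℕ) :
    choose (a + b) n = ∑ m ∈ range (n + 1), choose a m * choose b (n - m) := by
  rw [add_choose_eq n (Commute.all a b),
    Nat.sum_antidiagonal_eq_sum_range_succ fun i j => choose a i * choose b j]

lemma choose_natCast_add_eq_sum_range_min (x : ℕ) (b : R) (n : ℕ) :
    choose (x + b) n = ∑ m ∈ range (min x n + 1), choose (x : R) m * choose b (n - m) := by
  rw [choose_add_eq_sum_range]
  refine (sum_subset (range_subset_range.2 (by lia)) fun m hm hm' => ?_).symm
  simp only [mem_range] at hm hm'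
  rw [choose_natCast, Nat.choose_eq_zero_of_lt (by lia), Nat.cast_zero, zero_mul]

/-- The Pfaff–Saalschütz summation. Vandermonde expands the last factor; after exchanging the two
sums, Vandermonde applies again to each of them. -/
lemma sum_choose_mul_choose_mul_choose (p q : R) (X Z : ℕ) :
    ∑ l ∈ range (min X Z + 1),
      choose (q - p + X) l * choose (p - Z) (X - l) * choose (((X - l : ℕ) : R) + q) (Z - l) =
    choose p X * choose q Z := by
  have vandermonde (s : ℕ) (hs : s ≤ Z) (hs' : s ≤ X) : ∑ l ∈ range (s + 1),
      choose (q - p + X) l * choose (p - Z - ((X - s : ℕ) : R)) (s - l) =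
        choose (q - ((Z - s : ℕ) : R)) s := by
    rw [← choose_add_eq_sum_range, Nat.cast_sub hs, Nat.cast_sub hs']
    congr 1
    ring
  calc
    _ = ∑ l ∈ range (min X Z + 1), ∑ e ∈ range (min X Z + 1 - l),
        choose (q - p + X) l * (choose (p - Z) (X - l) * choose ((X - l : ℕ) : R) e) *
          choose q (Z - l - e) := by
      refine sum_congr rfl fun l hl => ?_
      have hl := mem_range.1 hl
      rw [choose_natCast_add_eq_sum_range_min, mul_sum,
        show min (X - l) (Z - l) + 1 = min X Z + 1 - l by lia]
      exact sum_congr rfl fun e _ => by ring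
    _ = ∑ s ∈ range (min X Z + 1), ∑ l ∈ range (s + 1),
        choose (q - p + X) l * (choose (p - Z) (X - l) * choose ((X - l : ℕ) : R) (s - l)) *
          choose q (Z - l - (s - l)) := (sum_range_diag_flip _ _).symm
    _ = ∑ s ∈ range (min X Z + 1), choose (Z : R) s * choose (p - Z) (X - s) * choose q Z := by
      refine sum_congr rfl fun s hs => ?_
      have hs := mem_range.1 hs
      calc
        _ = ∑ l ∈ range (s + 1), (choose (q - p + X) l *
              choose (p - Z - ((X - s : ℕ) : R)) (s - l)) *
              (choose (p - Z) (X - s) * choose q (Z - s)) := by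
          refine sum_congr rfl fun l hl => ?_
          have hl := mem_range.1 hl
          rw [choose_mul_choose_natCast _ (by lia : s - l ≤ X - l),
            show X - l - (s - l) = X - s by lia, show Z - l - (s - l) = Z - s by lia]
          ring
        _ = _ := by
          rw [← sum_mul, vandermonde s (by lia) (by lia)]
          linear_combination -choose (p - Z) (X - s) *
            choose_mul_choose_natCast q (by lia : s ≤ Z)
    _ = _ := by
      rw [← sum_mul, min_comm, ← choose_natCast_add_eq_sum_range_min, add_sub_cancel]

end BinomialRing

section Pochhammer

lemma cpoch_neg_natCast (a : ℂ) (n : ℕ) :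
    cpoch a (-n) = (∏ i ∈ range n, (a - n + i))⁻¹ := by
  rcases n.eq_zero_or_pos with rfl | hn
  · simp [cpoch]
  · rw [cpoch, if_neg (by lia)]
    simp [sub_eq_add_neg]

lemma cpoch_add_one {a : ℂ} {k : ℤ} (h : k < 0 → a + k ≠ 0) :
    cpoch a (k + 1) = cpoch a k * (a + k) := by
  rcases le_or_gt 0 k with hk | hk
  · lift k to ℕ using hk
    rw [cpoch, cpoch, if_pos (by lia), if_pos (by lia), Int.toNat_natCast_add_one,
      prod_range_succ, Int.toNat_natCast, Int.cast_natCast]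
  · obtain ⟨n, rfl⟩ : ∃ n : ℕ, k = -((n + 1 : ℕ) : ℤ) := ⟨(-k - 1).toNat, by lia⟩
    have hprod : ∏ i ∈ range n, (a - ((n + 1 : ℕ) : ℂ) + (i + 1 : ℕ)) =
        ∏ i ∈ range n, (a - n + i) := prod_congr rfl fun i _ => by push_cast; ring
    have hne : a - ((n + 1 : ℕ) : ℂ) ≠ 0 := by simpa [sub_eq_add_neg] using h hk
    rw [show -((n + 1 : ℕ) : ℤ) + 1 = -(n : ℤ) by lia, cpoch_neg_natCast, cpoch_neg_natCast,
      prod_range_succ', hprod, Int.cast_neg, Int.cast_natCast, ← sub_eq_add_neg, Nat.cast_zero,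
      add_zero, mul_inv, inv_mul_cancel_right₀ hne]

lemma cpoch_add_natCast {a : ℂ} {k : ℤ} (h : ∀ j : ℤ, k ≤ j → j < 0 → a + j ≠ 0) (n : ℕ) :
    cpoch a (k + n) = cpoch a k * cpoch (a + k) n := by
  induction n with
  | zero => simp [cpoch]
  | succ n ih =>
    rw [Nat.cast_add_one, ← add_assoc, cpoch_add_one (h _ (by lia)), ih,
      cpoch_add_one (by lia), Int.cast_add, mul_assoc, add_assoc]

lemma cpoch_natCast_add (a : ℂ) (m n : ℕ) :
    cpoch a (m + n : ℕ) = cpoch a m * cpoch (a + m) n := by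
  simpa using cpoch_add_natCast (a := a) (k := m) (by lia) n

lemma cpoch_add_mul_cpoch_comm {a : ℂ} {k : ℤ} {p q : ℕ}
    (h : ∀ j : ℤ, k + min p q ≤ j → j < 0 → a + j ≠ 0) :
    cpoch a (k + p) * cpoch (a + k) q = cpoch a (k + q) * cpoch (a + k) p := by
  wlog hpq : p ≤ q generalizing p q
  · exact (this (by rwa [min_comm]) (by lia)).symm
  obtain ⟨r, rfl⟩ := Nat.exists_eq_add_of_le hpq
  have hk : cpoch a (k + (p + r : ℕ)) = cpoch a (k + p) * cpoch (a + k + p) r := by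
    have := cpoch_add_natCast (a := a) (k := k + p) (fun j hj => h j (by lia)) r
    simpa [add_assoc] using this
  rw [hk, cpoch_natCast_add, mul_right_comm, mul_assoc]

lemma cpoch_ne_zero {a : ℂ} {k : ℤ} (h : ∀ j : ℤ, min 0 k ≤ j → j < max 0 k → a + j ≠ 0) :
    cpoch a k ≠ 0 := by
  rcases le_or_gt 0 k with hk | hk
  · rw [cpoch, if_pos hk]
    exact prod_ne_zero_iff.2 fun i hi => by
      simpa using h i (by lia) (by have := mem_range.1 hi; lia)
  · rw [cpoch, if_neg (by lia)]
    exact inv_ne_zero <| prod_ne_zero_iff.2 fun i hi => by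
      simpa [add_assoc] using h (k + i) (by lia) (by have := mem_range.1 hi; lia)

lemma cpoch_eq_factorial_mul_multichoose (a : ℂ) (n : ℕ) :
    cpoch a n = n.factorial * Ring.multichoose a n := by
  rw [← nsmul_eq_mul, Ring.factorial_nsmul_multichoose_eq_ascPochhammer,
    Polynomial.ascPochhammer_smeval_eq_eval]
  induction n with
  | zero => simp [cpoch]
  | succ n ih =>
    rw [Nat.cast_add_one, cpoch_add_one (by lia), ascPochhammer_succ_eval, ih, Int.cast_natCast]

lemma choose_add_natCast_sub_one (a : ℂ) (n : ℕ) :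
    Ring.choose (a + n - 1) n = cpoch a n / n.factorial := by
  rw [cpoch_eq_factorial_mul_multichoose, Ring.multichoose_eq,
    mul_div_cancel_left₀ _ (Nat.cast_ne_zero.2 n.factorial_ne_zero)]

lemma choose_neg_eq_cpoch (a : ℂ) (n : ℕ) :
    Ring.choose (-a) n = (-1) ^ n * cpoch a n / n.factorial := by
  rw [Ring.choose_neg, choose_add_natCast_sub_one, mul_div_assoc]
  simp [Int.negOnePow, Units.smul_def]

lemma cpoch_mul_choose_neg_sub (a : ℂ) (n j : ℕ) :
    cpoch a n * Ring.choose (-a - n) j = (-1) ^ j * cpoch a (n + j : ℕ) / j.factorial := by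
  rw [← neg_add', choose_neg_eq_cpoch, cpoch_natCast_add]
  ring

lemma cpoch_mul_choose_neg_sub_comm (a : ℂ) {n j p m : ℕ} (h : n + j = p + m) :
    cpoch a n * Ring.choose (-a - n) j =
      (-1) ^ (j + m) * (m.factorial / j.factorial) * (cpoch a p * Ring.choose (-a - p) m) := by
  have hm : (m.factorial : ℂ) ≠ 0 := Nat.cast_ne_zero.2 m.factorial_ne_zero
  rw [cpoch_mul_choose_neg_sub, cpoch_mul_choose_neg_sub, h, pow_add]
  field_simp
  simp [← pow_mul]

lemma choose_natCast_add_div_factorial (m n : ℕ) :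
    Ring.choose ((m + n : ℕ) : ℂ) m / (m + n).factorial = 1 / (m.factorial * n.factorial) := by
  rw [Ring.choose_natCast, Nat.cast_add_choose, div_right_comm,
    div_self (Nat.cast_ne_zero.2 (m + n).factorial_ne_zero)]

lemma genBinom_eq_choose (a : ℂ) (n : ℕ) : genBinom a n = Ring.choose a n := by
  rw [genBinom, Ring.choose_eq_smul, smul_eq_mul, div_eq_inv_mul,
    ← descPochhammer_eval_eq_prod_range, descPochhammer_eval_eq_ascPochhammer,
    Polynomial.descPochhammer_smeval_eq_ascPochhammer, Polynomial.ascPochhammer_smeval_eq_eval]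

lemma choose_div_cpoch_comm {a : ℂ} {r s : ℤ} {p q : ℕ} (hrs : r + q = s + p)
    (h : ∀ j : ℤ, min 0 (min r s) ≤ j → j < max 0 (max r s) → a + j ≠ 0) :
    Ring.choose (a + r - 1) p / cpoch a r =
      q.factorial / p.factorial * (Ring.choose (a + s - 1) q / cpoch a s) := by
  obtain ⟨k, rfl⟩ : ∃ k : ℤ, r = k + p := ⟨r - p, by lia⟩
  obtain rfl : s = k + q := by lia
  have hchoose (n : ℕ) :
      Ring.choose (a + (k + n : ℤ) - 1) n = cpoch (a + k) n / n.factorial := by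
    rw [← choose_add_natCast_sub_one, Int.cast_add, Int.cast_natCast, ← add_assoc]
  have hcomm := cpoch_add_mul_cpoch_comm (a := a) (k := k) (p := p) (q := q)
    fun j hj hj' => h j (by lia) (by lia)
  have hp : cpoch a (k + p) ≠ 0 := cpoch_ne_zero fun j hj hj' => h j (by lia) (by lia)
  have hq : cpoch a (k + q) ≠ 0 := cpoch_ne_zero fun j hj hj' => h j (by lia) (by lia)
  have hp! : (p.factorial : ℂ) ≠ 0 := Nat.cast_ne_zero.2 p.factorial_ne_zero
  have hq! : (q.factorial : ℂ) ≠ 0 := Nat.cast_ne_zero.2 q.factorial_ne_zero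
  rw [hchoose, hchoose]
  field_simp
  linear_combination -hcomm

end Pochhammer

/-- The summand of the identity, without the constraints on the summation indices. -/
noncomputable def ggrSummand (α β γ : ℂ) (i j k l m n : ℕ) : ℂ :=
  (-1 : ℂ) ^ (i + j + k + l + m) *
    (cpoch β (n : ℤ) * cpoch γ (n : ℤ) / ((n.factorial : ℂ) * cpoch (α + β) (n : ℤ))) *
    genBinom (-γ - (n : ℂ)) i * genBinom (-β - (n : ℂ)) j *
    genBinom (α + β + (n : ℂ) - 1) k * genBinom (γ - α) l * genBinom (n : ℂ) m

lemma ggrSummand_eq_zero_of_lt {m n : ℕ} (h : n < m) (α β γ : ℂ) (i j k l : ℕ) :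
    ggrSummand α β γ i j k l m n = 0 := by
  rw [ggrSummand, genBinom_eq_choose (n : ℂ), Ring.choose_natCast, Nat.choose_eq_zero_of_lt h,
    Nat.cast_zero, mul_zero]

section Summation

open Ring (choose)

variable {α β γ : ℂ} {x Y z : ℕ}

lemma ggrSummand_add_eq {i j k m y : ℕ} (hx : m + i = x) (hY : j + y = Y) (hz : j + k = z)
    (hc : ∀ n : ℤ, min 0 ((x : ℤ) + Y - z) ≤ n → n < x + Y → α + β + n ≠ 0) (l : ℕ) :
    ggrSummand α β γ i j k l m (m + y) =
      (-1) ^ (z + l + Y) * (cpoch β Y / cpoch (α + β) (x + Y - z)) * (cpoch γ x / z.factorial) *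
        choose (γ - α) l * (choose (-β - Y) m * choose (α + β + (x + Y - z : ℤ) - 1) i) *
        (choose (z : ℂ) j * choose (-γ - x) y) := by
  have hβ := cpoch_mul_choose_neg_sub_comm β (by lia : m + y + j = Y + m)
  have hγ := cpoch_mul_choose_neg_sub_comm γ (by lia : m + y + i = x + y)
  have hαβ := choose_div_cpoch_comm (a := α + β)
    (by lia : ((m + y : ℕ) : ℤ) + i = x + Y - z + k) fun n hn hn' => hc n (by lia) (by lia)
  have hm := choose_natCast_add_div_factorial m y
  have hj := choose_natCast_add_div_factorial j k
  rw [hz] at hj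
  have hsign : (-1 : ℂ) ^ (i + j + k + l + m) * (-1) ^ (j + m) * (-1) ^ (i + y) =
      (-1) ^ (z + l + Y) := by
    rw [← pow_add, ← pow_add]
    exact neg_one_pow_congr (by grind)
  have hfactorials : (m.factorial / j.factorial : ℂ) * (y.factorial / i.factorial) *
      (i.factorial / k.factorial) / (m.factorial * y.factorial) =
        1 / (j.factorial * k.factorial) := by
    have hm! : (m.factorial : ℂ) ≠ 0 := Nat.cast_ne_zero.2 m.factorial_ne_zero
    have hy! : (y.factorial : ℂ) ≠ 0 := Nat.cast_ne_zero.2 y.factorial_ne_zero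
    have hi! : (i.factorial : ℂ) ≠ 0 := Nat.cast_ne_zero.2 i.factorial_ne_zero
    field_simp
  calc
    _ = (-1) ^ (i + j + k + l + m) * (cpoch β (m + y : ℕ) * choose (-β - (m + y : ℕ)) j) *
          (cpoch γ (m + y : ℕ) * choose (-γ - (m + y : ℕ)) i) *
          (choose (α + β + ((m + y : ℕ) : ℤ) - 1) k / cpoch (α + β) (m + y : ℕ)) *
          choose (γ - α) l * (choose ((m + y : ℕ) : ℂ) m / (m + y).factorial) := by
      simp only [ggrSummand, genBinom_eq_choose, Int.cast_natCast]
      ring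
    _ = (-1) ^ (i + j + k + l + m) * (-1) ^ (j + m) * (-1) ^ (i + y) *
          (cpoch β Y * choose (-β - Y) m) * (cpoch γ x * choose (-γ - x) y) *
          (choose (α + β + (x + Y - z : ℤ) - 1) i / cpoch (α + β) (x + Y - z)) *
          choose (γ - α) l * ((m.factorial / j.factorial) * (y.factorial / i.factorial) *
            (i.factorial / k.factorial) / (m.factorial * y.factorial)) := by
      rw [hβ, hγ, hαβ, hm]
      ring
    _ = _ := by
      rw [hsign, hfactorials, ← hj]
      ring

lemma cpoch_mul_sum_choose_mul_choose
    (hγ : ∀ n : ℤ, (x : ℤ) + Y - z ≤ n → n < 0 → γ + n ≠ 0) :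
    cpoch γ x / z.factorial *
        ∑ j ∈ range (min z Y + 1), choose (z : ℂ) j * choose (-γ - x) (Y - j) =
      (-1) ^ Y * (cpoch γ (x + Y - z) / Y.factorial) * choose (x + (γ - 1)) z := by
  have hsum : ∑ j ∈ range (min z Y + 1), choose (z : ℂ) j * choose (-γ - x) (Y - j) =
      (-1) ^ Y * cpoch (γ + (x - z : ℤ)) Y / Y.factorial := by
    rw [← choose_natCast_add_eq_sum_range_min, ← choose_neg_eq_cpoch]
    congr 1
    push_cast
    ring
  have hchoose : choose (x + (γ - 1)) z = cpoch (γ + (x - z : ℤ)) z / z.factorial := by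
    rw [← choose_add_natCast_sub_one]
    congr 1
    push_cast
    ring
  have hcomm := cpoch_add_mul_cpoch_comm (a := γ) (k := x - z) (p := z) (q := Y)
    fun n hn hn' => hγ n (by lia) hn'
  rw [sub_add_cancel, show (x - z : ℤ) + Y = x + Y - z by lia] at hcomm
  rw [hsum, hchoose]
  linear_combination (-1) ^ Y / (Y.factorial * z.factorial) * hcomm

lemma sum_ggrSummand
    (hc : ∀ n : ℤ, min 0 ((x : ℤ) + Y - z) ≤ n → n < x + Y → α + β + n ≠ 0)
    (hγ : ∀ n : ℤ, (x : ℤ) + Y - z ≤ n → n < 0 → γ + n ≠ 0) (l : ℕ) :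
    ∑ p ∈ antidiagonal x, ∑ j ∈ range (min z Y + 1),
        ggrSummand α β γ p.2 j (z - j) l p.1 (p.1 + (Y - j)) =
      (-1) ^ (z + l) * (cpoch β Y * cpoch γ (x + Y - z) /
        (Y.factorial * cpoch (α + β) (x + Y - z))) *
        (choose (γ - α) l * choose (α + x - 1 - z) x * choose (x + (γ - 1)) z) := by
  have vandermonde : ∑ p ∈ antidiagonal x,
      choose (-β - Y) p.1 * choose (α + β + (x + Y - z : ℤ) - 1) p.2 =
        choose (α + x - 1 - z) x := by
    rw [← Ring.add_choose_eq x (Commute.all _ _)]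
    congr 1
    push_cast
    ring
  have hsign : (-1 : ℂ) ^ Y * (-1) ^ Y = 1 := pow_mul_pow_eq_one Y (by norm_num)
  calc
    _ = ∑ p ∈ antidiagonal x, ∑ j ∈ range (min z Y + 1),
          (-1) ^ (z + l + Y) * (cpoch β Y / cpoch (α + β) (x + Y - z)) *
            (cpoch γ x / z.factorial) * choose (γ - α) l *
            (choose (-β - Y) p.1 * choose (α + β + (x + Y - z : ℤ) - 1) p.2) *
            (choose (z : ℂ) j * choose (-γ - x) (Y - j)) := by
      refine sum_congr rfl fun p hp => sum_congr rfl fun j hj => ?_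
      rw [HasAntidiagonal.mem_antidiagonal] at hp
      rw [mem_range] at hj
      exact ggrSummand_add_eq hp (by lia) (by lia) hc l
    _ = (-1) ^ (z + l) * (-1) ^ Y * (cpoch β Y / cpoch (α + β) (x + Y - z)) *
          choose (γ - α) l * choose (α + x - 1 - z) x * (cpoch γ x / z.factorial *
            ∑ j ∈ range (min z Y + 1), choose (z : ℂ) j * choose (-γ - x) (Y - j)) := by
      simp_rw [← mul_sum, ← sum_mul, ← mul_sum, vandermonde]
      ring
    _ = _ := by
      rw [cpoch_mul_sum_choose_mul_choose hγ]
      linear_combination (-1) ^ (z + l) * (cpoch β Y * cpoch γ (x + Y - z) /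
        (Y.factorial * cpoch (α + β) (x + Y - z))) *
        (choose (γ - α) l * choose (α + x - 1 - z) x * choose (x + (γ - 1)) z) * hsign

end Summation

lemma tsum_ite_eq_sum {M : Type*} [AddCommMonoid M] [TopologicalSpace M]
    {f : ℕ → ℕ → ℕ → ℕ → ℕ → ℕ → M} (hf : ∀ i j k l m n, n < m → f i j k l m n = 0)
    (X Y Z : ℕ) :
    ∑' t : ℕ × ℕ × ℕ × ℕ × ℕ × ℕ,
      (fun i j k l m n => if i + l + m = X ∧ j + n = Y + m ∧ j + k + l = Z then
        f i j k l m n else 0) t.1 t.2.1 t.2.2.1 t.2.2.2.1 t.2.2.2.2.1 t.2.2.2.2.2 =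
    ∑ l ∈ range (min X Z + 1), ∑ p ∈ antidiagonal (X - l), ∑ j ∈ range (min (Z - l) Y + 1),
      f p.2 j (Z - l - j) l p.1 (p.1 + (Y - j)) := by
  let S : Finset (Σ _ : ℕ, Σ _ : ℕ × ℕ, ℕ) := (range (min X Z + 1)).sigma fun l =>
    (antidiagonal (X - l)).sigma fun _ => range (min (Z - l) Y + 1)
  let g : (Σ _ : ℕ, Σ _ : ℕ × ℕ, ℕ) → ℕ × ℕ × ℕ × ℕ × ℕ × ℕ := fun ⟨l, p, j⟩ =>
    (p.2, j, Z - l - j, l, p.1, p.1 + (Y - j))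
  have hg : g.Injective := by
    rintro ⟨l, ⟨m, i⟩, j⟩ ⟨l', ⟨m', i'⟩, j'⟩ h
    simp only [g, Prod.mk.injEq] at h
    grind
  rw [tsum_eq_sum (s := S.map ⟨g, hg⟩), sum_map, sum_sigma]
  · refine sum_congr rfl fun l hl => (sum_sigma _ _ _).trans ?_
    refine sum_congr rfl fun ⟨m, i⟩ hp => sum_congr rfl fun j hj => if_pos ?_
    simp only [mem_range, HasAntidiagonal.mem_antidiagonal] at hl hp hj
    dsimp only [g, Function.Embedding.coeFn_mk]
    lia
  · rintro ⟨i, j, k, l, m, n⟩ ht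
    refine ite_eq_right_iff.2 fun ⟨hX, hY, hZ⟩ => hf _ _ _ _ _ _ ?_
    dsimp only at hX hY hZ
    by_contra! hmn
    refine ht (mem_map.2 ⟨⟨l, (m, i), j⟩, ?_, ?_⟩)
    · simp only [S, mem_sigma, mem_range, HasAntidiagonal.mem_antidiagonal]
      lia
    · simp only [g, Function.Embedding.coeFn_mk, Prod.mk.injEq]
      lia

/-- The conditions on `α + β` and `γ` say that all the Pochhammer symbols involved are defined and
that no denominator vanishes. -/
theorem ggr_coefficient_identity_second_form_general (α β γ : ℂ) (X Y Z : ℕ)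
    (hαβ : ∀ n : ℤ, min 0 ((X : ℤ) + Y - Z) ≤ n → n < X + Y → α + β + n ≠ 0)
    (hγ : ∀ n : ℤ, (X : ℤ) + Y - Z ≤ n → n < 0 → γ + n ≠ 0) :
    (∑' t : ℕ × ℕ × ℕ × ℕ × ℕ × ℕ,
      (fun (i j k l m n : ℕ) =>
        if i + l + m = X ∧ j + n = Y + m ∧ j + k + l = Z then
          ggrSummand α β γ i j k l m n
        else 0) t.1 t.2.1 t.2.2.1 t.2.2.2.1 t.2.2.2.2.1 t.2.2.2.2.2) =
    cpoch α (X : ℤ) * cpoch β (Y : ℤ) * cpoch (1 - γ) (Z : ℤ) *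
        cpoch γ ((X : ℤ) + (Y : ℤ) - (Z : ℤ)) /
      ((X.factorial : ℂ) * (Y.factorial : ℂ) * (Z.factorial : ℂ) *
        cpoch (α + β) ((X : ℤ) + (Y : ℤ) - (Z : ℤ))) := by
  have hsum (l : ℕ) (hl : l ∈ range (min X Z + 1)) : ∑ p ∈ antidiagonal (X - l),
      ∑ j ∈ range (min (Z - l) Y + 1), ggrSummand α β γ p.2 j (Z - l - j) l p.1 (p.1 + (Y - j)) =
      (-1) ^ Z * (cpoch β Y * cpoch γ (X + Y - Z) / (Y.factorial * cpoch (α + β) (X + Y - Z))) *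
        (Ring.choose (γ - 1 - (α + X - 1) + X) l * Ring.choose (α + X - 1 - Z) (X - l) *
          Ring.choose (((X - l : ℕ) : ℂ) + (γ - 1)) (Z - l)) := by
    obtain ⟨hlX, hlZ⟩ : l ≤ X ∧ l ≤ Z := by simpa [Nat.lt_succ_iff] using hl
    have hXZ : α + (X - l : ℕ) - 1 - (Z - l : ℕ) = α + X - 1 - Z := by
      push_cast [hlX, hlZ]
      ring
    rw [sum_ggrSummand (fun n hn hn' => hαβ n (by lia) (by lia)) (fun n hn => hγ n (by lia)),
      Nat.sub_add_cancel hlZ, show ((X - l : ℕ) : ℤ) + Y - (Z - l : ℕ) = X + Y - Z by lia, hXZ,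
      show γ - 1 - (α + X - 1) + X = γ - α by ring]
  have hZ := choose_neg_eq_cpoch (1 - γ) Z
  rw [neg_sub] at hZ
  have hsign : (-1 : ℂ) ^ Z * (-1) ^ Z = 1 := pow_mul_pow_eq_one Z (by norm_num)
  rw [tsum_ite_eq_sum fun i j k l m n h => ggrSummand_eq_zero_of_lt h α β γ i j k l,
    sum_congr rfl hsum, ← mul_sum, sum_choose_mul_choose_mul_choose,
    choose_add_natCast_sub_one, hZ]
  linear_combination (cpoch β Y * cpoch γ (X + Y - Z) /
    (Y.factorial * cpoch (α + β) (X + Y - Z))) * (cpoch α X / X.factorial) *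
      (cpoch (1 - γ) Z / Z.factorial) * hsign

theorem ggr_coefficient_identity_second_form (α β γ : ℂ)
    (hαβ : ∀ n : ℤ, α + β ≠ (n : ℂ)) (hγ : ∀ n : ℤ, γ ≠ (n : ℂ)) (X Y Z : ℕ) :
    (∑' t : ℕ × ℕ × ℕ × ℕ × ℕ × ℕ,
      (fun (i j k l m n : ℕ) =>
        if i + l + m = X ∧ j + n = Y + m ∧ j + k + l = Z then
          (-1 : ℂ) ^ (i + j + k + l + m) *
            (cpoch β (n : ℤ) * cpoch γ (n : ℤ) /
              ((n.factorial : ℂ) * cpoch (α + β) (n : ℤ))) *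
            genBinom (-γ - (n : ℂ)) i * genBinom (-β - (n : ℂ)) j *
            genBinom (α + β + (n : ℂ) - 1) k * genBinom (γ - α) l *
            genBinom (n : ℂ) m
        else 0) t.1 t.2.1 t.2.2.1 t.2.2.2.1 t.2.2.2.2.1 t.2.2.2.2.2) =
    cpoch α (X : ℤ) * cpoch β (Y : ℤ) * cpoch (1 - γ) (Z : ℤ) *
        cpoch γ ((X : ℤ) + (Y : ℤ) - (Z : ℤ)) /
      ((X.factorial : ℂ) * (Y.factorial : ℂ) * (Z.factorial : ℂ) *
        cpoch (α + β) ((X : ℤ) + (Y : ℤ) - (Z : ℤ))) := by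
  have add_ne_zero {a : ℂ} (ha : ∀ n : ℤ, a ≠ n) (n : ℤ) : a + n ≠ 0 := fun h =>
    ha (-n) (by simpa using eq_neg_of_add_eq_zero_left h)
  exact ggr_coefficient_identity_second_form_general α β γ X Y Z
    (fun n _ _ => add_ne_zero hαβ n) (fun n _ _ => add_ne_zero hγ n)
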